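/- Let 𝕂 be a number field. There is a constant c = c(𝕂) such that the following holds for all sufficiently large y. Let 𝔭 be a prime ideal with y^{1/3} ≤ 𝒩(𝔭) < y^{1/2}, and set u := log y / log 𝒩(𝔭) (so 2 < u ≤ 3). Then |∑_{𝔰∈ℙ, 𝔭 ≼ 𝔰 ≺ 𝔔(y^{1/2})} (y/𝒩(𝔰)) / log(y/𝒩(𝔰)) − (log(u−1)/u) · y/log 𝒩(𝔭)| ≤ c · y / log² y. -/

import Mathlib

open NumberField

open scoped Classical

variable (K : Type*) [Field K] [NumberField K]

/-- The nonzero prime ideals of the ring of integers. -/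
def PrimeIdeal := {p : Ideal (𝓞 K) // p ≠ ⊥ ∧ p.IsPrime}

/-!
Mertens' first theorem for `K`, in the form `∑ log 𝒩𝔭 / 𝒩𝔭 = log x + O(1)` over `𝒩𝔭 ≤ x`, comes
from evaluating `∑ log |N(α)|` in two ways, where `α` runs over a cube of side `M` in `𝒪`,
translated by a large multiple of `M`. On the one hand all these `α` have norm `≍ M ^ d`. On the
other hand `log |N(α)| = ∑ Λ(I)` over the ideals `I` containing `α`, and `I` contains
`M ^ d / 𝒩I + O(M ^ (d - 1) 𝒩I ^ (1 / d - 1))` points of the cube, because every class modulo `I`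
has a representative with coordinates `≪ 𝒩I ^ (1 / d)`; Chebyshev's bound absorbs the error terms.

Since `(y / t) / log (y / t) = y · (log t / t) · f t` with `f t = 1 / (log t · (log y - log t))`,
partial summation against the Mertens sum replaces the sum by `y ∫ f t dt / t` from `𝒩𝔭` to `√y`,
with an error `≪ y · f (𝒩𝔭) ≪ y / log² y` as `f` is decreasing there. The integrand has the
antiderivative `(log log t - log (log y - log t)) / log y`.
-/

open Finset ArithmeticFunction

section ElementarySums

theorem sum_Ioc_mul_le_sum_Ioc_mul {b c g : ℕ → ℝ} (hg : AntitoneOn g (Set.Ici 1))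
    (hg₀ : ∀ n, 0 ≤ g n) (h : ∀ m, ∑ n ∈ Ioc 0 m, b n ≤ ∑ n ∈ Ioc 0 m, c n) (X : ℕ) :
    ∑ n ∈ Ioc 0 X, b n * g n ≤ ∑ n ∈ Ioc 0 X, c n * g n := by
  suffices excess_mul_le : ∀ m, (∑ n ∈ Ioc 0 m, c n - ∑ n ∈ Ioc 0 m, b n) * g m ≤
      ∑ n ∈ Ioc 0 m, c n * g n - ∑ n ∈ Ioc 0 m, b n * g n from
    sub_nonneg.mp ((mul_nonneg (sub_nonneg.mpr (h X)) (hg₀ X)).trans (excess_mul_le X))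
  intro m
  induction m with
  | zero => simp
  | succ m ih =>
    have mul_antitone : (∑ n ∈ Ioc 0 m, c n - ∑ n ∈ Ioc 0 m, b n) * g (m + 1) ≤
        (∑ n ∈ Ioc 0 m, c n - ∑ n ∈ Ioc 0 m, b n) * g m := by
      rcases m.eq_zero_or_pos with rfl | hm
      · simp
      · exact mul_le_mul_of_nonneg_left (hg (Set.mem_Ici.mpr hm) (Set.mem_Ici.mpr m.succ_pos)
          m.le_succ) (sub_nonneg.mpr (h m))
    simp only [sum_Ioc_succ_top m.zero_le]
    linarith

theorem sum_Ioc_rpow_sub_one_le {θ : ℝ} (h₀ : 0 < θ) (h₁ : θ ≤ 1) (X : ℕ) :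
    ∑ n ∈ Ioc 0 X, (n : ℝ) ^ (θ - 1) ≤ (X : ℝ) ^ θ / θ := by
  induction X with
  | zero => simp [Real.zero_rpow h₀.ne']
  | succ m ih =>
    have hx : (0 : ℝ) < (m + 1 : ℕ) := by positivity
    have hx₁ : (1 : ℝ) ≤ (m + 1 : ℕ) := by simp
    set x : ℝ := ((m + 1 : ℕ) : ℝ) with hxm
    have hneg : -1 ≤ -1 / x := by rw [le_div_iff₀ hx]; linarith
    have hm : (m : ℝ) = x * (1 + -1 / x) := by field_simp; rw [hxm]; push_cast; ring
    have bernoulli : (m : ℝ) ^ θ ≤ x ^ θ - θ * x ^ (θ - 1) := by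
      rw [hm, Real.mul_rpow hx.le (by linarith), Real.rpow_sub_one hx.ne']
      calc x ^ θ * (1 + -1 / x) ^ θ ≤ x ^ θ * (1 + θ * (-1 / x)) := by
            gcongr; exact rpow_one_add_le_one_add_mul_self hneg h₀.le h₁
        _ = x ^ θ - θ * (x ^ θ / x) := by ring
    rw [sum_Ioc_succ_top m.zero_le]
    rw [le_div_iff₀ h₀] at ih ⊢
    linarith

theorem sum_vonMangoldt_mul_rpow_sub_one_le {θ : ℝ} (h₀ : 0 < θ) (h₁ : θ ≤ 1) (X : ℕ) :
    ∑ n ∈ Ioc 0 X, Λ n * (n : ℝ) ^ (θ - 1) ≤ (Real.log 4 + 4) * ((X : ℝ) ^ θ / θ) := by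
  have chebyshev (m : ℕ) : ∑ n ∈ Ioc 0 m, Λ n ≤ ∑ n ∈ Ioc 0 m, (Real.log 4 + 4) := by
    have := Chebyshev.psi_le_const_mul_self m.cast_nonneg
    rw [Chebyshev.psi, Nat.floor_natCast] at this
    rwa [sum_const, Nat.card_Ioc, nsmul_eq_mul, Nat.sub_zero, mul_comm]
  have anti : AntitoneOn (fun n : ℕ => (n : ℝ) ^ (θ - 1)) (Set.Ici 1) := fun m hm n _ hmn =>
    Real.rpow_le_rpow_of_nonpos (Nat.cast_pos.mpr hm) (by exact_mod_cast hmn) (by linarith)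
  calc ∑ n ∈ Ioc 0 X, Λ n * (n : ℝ) ^ (θ - 1)
      ≤ ∑ n ∈ Ioc 0 X, (Real.log 4 + 4) * (n : ℝ) ^ (θ - 1) :=
        sum_Ioc_mul_le_sum_Ioc_mul anti (fun n => by positivity) chebyshev X
    _ ≤ (Real.log 4 + 4) * ((X : ℝ) ^ θ / θ) := by
        rw [← mul_sum]
        gcongr
        exact sum_Ioc_rpow_sub_one_le h₀ h₁ X

theorem exists_abs_sub_log_le_of_monotone {S : ℕ → ℝ} (hS : Monotone S) {c d : ℕ} (hc : 0 < c)
    (hd : d ≠ 0) {D : ℝ} (h : ∀ M : ℕ, 1 ≤ M → |S (c * M ^ d) - Real.log (M ^ d)| ≤ D) :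
    ∃ C, ∀ X : ℕ, 1 ≤ X → |S X - Real.log X| ≤ C := by
  refine ⟨D + |S 0| + Real.log c + Real.log (2 ^ d), fun X hX => ?_⟩
  have hD : 0 ≤ D := (abs_nonneg _).trans (h 1 le_rfl)
  have hlogc : 0 ≤ Real.log c := Real.log_natCast_nonneg c
  have hlog2 : 0 ≤ Real.log (2 ^ d) := Real.log_nonneg (one_le_pow₀ one_le_two)
  set M := Nat.nthRoot d (X / c)
  have hlow : c * M ^ d ≤ X := by
    rw [mul_comm, ← Nat.le_div_iff_mul_le hc, ← Nat.le_nthRoot_iff hd]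
  have hhigh : X < c * (M + 1) ^ d := by
    rw [mul_comm, ← Nat.div_lt_iff_lt_mul hc, ← Nat.nthRoot_lt_iff hd]
    exact Nat.lt_succ_self M
  have hdouble (hM0 : 0 < M) : (M + 1) ^ d ≤ 2 ^ d * M ^ d := by
    rw [← mul_pow]; gcongr; omega
  have hX₀ : (0 : ℝ) < X := by exact_mod_cast hX
  rw [abs_le]
  constructor
  · rcases Nat.eq_zero_or_pos M with hM0 | hM0
    · have hXc : Real.log X ≤ Real.log c :=
        Real.log_le_log hX₀ (by exact_mod_cast (by simpa [hM0] using hhigh.le))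
      linarith [hS X.zero_le, neg_abs_le (S 0)]
    · have hlog : Real.log X ≤ Real.log c + (Real.log (2 ^ d) + Real.log (M ^ d)) := by
        rw [← Real.log_mul (by positivity) (by positivity),
          ← Real.log_mul (by positivity) (by positivity)]
        gcongr
        exact_mod_cast hhigh.le.trans (Nat.mul_le_mul_left c (hdouble hM0))
      linarith [hS hlow, (abs_le.mp (h M hM0)).1, abs_nonneg (S 0)]
  · have hlog : Real.log ((M + 1 : ℕ) ^ d) ≤ Real.log (2 ^ d) + Real.log X := by
      rw [← Real.log_mul (by positivity) (by positivity)]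
      gcongr
      norm_cast
      rcases Nat.eq_zero_or_pos M with hM0 | hM0
      · simpa [hM0, Nat.one_le_iff_ne_zero] using Nat.one_le_iff_ne_zero.mp hX
      · exact (hdouble hM0).trans
          (Nat.mul_le_mul_left _ ((Nat.le_mul_of_pos_left _ hc).trans hlow))
    linarith [hS hhigh.le, (abs_le.mp (h (M + 1) M.succ_pos)).2, abs_nonneg (S 0)]

end ElementarySums

theorem abs_natCast_sub_pow_le {c m k n : ℕ} (hl : (m - k) ^ n ≤ c) (hu : c ≤ (m + k) ^ n) :
    |(c : ℝ) - (m : ℝ) ^ n| ≤ k * n * (m + k : ℝ) ^ (n - 1) := by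
  have hk : |((m - k : ℕ) : ℝ) - m| ≤ k := by
    have := tsub_le_self (a := m) (b := k)
    rw [abs_sub_comm, ← Nat.cast_sub this, Nat.abs_cast, Nat.cast_le]
    omega
  have hpow (a : ℕ) (ha : a ≤ m + k) (hak : |(a : ℝ) - m| ≤ k) :
      |(a : ℝ) ^ n - (m : ℝ) ^ n| ≤ k * n * (m + k : ℝ) ^ (n - 1) := by
    have hmax : max |(a : ℝ)| |(m : ℝ)| ≤ m + k := by
      rw [Nat.abs_cast, Nat.abs_cast]; exact_mod_cast max_le ha le_self_add
    exact (abs_pow_sub_pow_le _ _ _).trans (by gcongr)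
  have hl' := hpow (m - k) (by omega) hk
  have hu' := hpow (m + k) le_rfl (by simp)
  have : ((m - k : ℕ) : ℝ) ^ n ≤ c := by exact_mod_cast hl
  have : (c : ℝ) ≤ ((m + k : ℕ) : ℝ) ^ n := by exact_mod_cast hu
  rw [abs_le] at hl' hu' ⊢
  constructor <;> linarith

section CoordBox

variable {ι A : Type*} [Fintype ι] [AddCommGroup A] (b : Module.Basis ι ℤ A)

/-- The half-open cube of elements of a free abelian group all of whose coordinates with respect to
the basis `b` lie in `[l, u)`. -/
noncomputable def coordBox (l u : ℤ) : Finset A :=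
  (Fintype.piFinset fun _ : ι => Ico l u).map b.equivFun.symm.toEquiv.toEmbedding

variable {b}

theorem mem_coordBox {l u : ℤ} {x : A} :
    x ∈ coordBox b l u ↔ ∀ i, l ≤ b.repr x i ∧ b.repr x i < u := by
  simp only [coordBox, mem_map_equiv, Fintype.mem_piFinset, mem_Ico]
  rfl

theorem card_coordBox (l u : ℤ) : #(coordBox b l u) = (u - l).toNat ^ Fintype.card ι := by
  simp [coordBox]

theorem exists_ne_zero_mem_abs_repr_le (b : Module.Basis ι ℤ A) {H : AddSubgroup A}
    [H.FiniteIndex] {s : ℕ} (h : H.index < (s + 1) ^ Fintype.card ι) :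
    ∃ γ ∈ H, γ ≠ 0 ∧ ∀ i, |b.repr γ i| ≤ s := by
  have := Fintype.ofFinite (A ⧸ H)
  have hcard : #(univ : Finset (A ⧸ H)) < #(coordBox b 0 (s + 1)) := by
    rwa [card_coordBox, card_univ, ← Nat.card_eq_fintype_card, sub_zero, ← Nat.cast_succ,
      Int.toNat_natCast]
  obtain ⟨x, hx, y, hy, hxy, hmk⟩ := exists_ne_map_eq_of_card_lt_of_maps_to hcard
    (f := (QuotientAddGroup.mk : A → A ⧸ H)) (fun _ _ => mem_coe.mpr (mem_univ _))
  refine ⟨y - x, ?_, sub_ne_zero.mpr hxy.symm, fun i => ?_⟩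
  · rwa [QuotientAddGroup.eq, neg_add_eq_sub] at hmk
  · rw [map_sub, Finsupp.sub_apply]
    have := mem_coordBox.mp hx i
    have := mem_coordBox.mp hy i
    rw [abs_le]
    omega

variable {H : AddSubgroup A} {δ : ℕ}

/-- The translates of the counted points by representatives of the classes, all of size at most
`δ`, fill up the cube except for a boundary layer. -/
theorem card_coordBox_filter_mul_index_le [H.FiniteIndex]
    (hδ : ∀ q : A ⧸ H, ∃ r : A, (r : A ⧸ H) = q ∧ ∀ i, |b.repr r i| ≤ δ) (v : A) (M : ℕ) :
    #{x ∈ coordBox b 0 M | v + x ∈ H} * H.index ≤ (M + 2 * δ) ^ Fintype.card ι := by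
  have := Fintype.ofFinite (A ⧸ H)
  choose ρ hρ hρδ using hδ
  have hclass {x : A} (hx : v + x ∈ H) (q : A ⧸ H) : ((v + (x + ρ q) : A) : A ⧸ H) = q := by
    rw [← add_assoc, QuotientAddGroup.mk_add, (QuotientAddGroup.eq_zero_iff _).mpr hx, zero_add, hρ]
  calc #{x ∈ coordBox b 0 M | v + x ∈ H} * H.index
      = #({x ∈ coordBox b 0 M | v + x ∈ H} ×ˢ (univ : Finset (A ⧸ H))) := by
        rw [card_product, card_univ, ← Nat.card_eq_fintype_card]; rfl
    _ ≤ #(coordBox b (-δ) (M + δ)) := by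
        refine card_le_card_of_injOn (fun p => p.1 + ρ p.2) (fun p hp => ?_) ?_
        · have hp := (mem_filter.mp (mem_product.mp hp).1).1
          refine mem_coordBox.mpr fun i => ?_
          have := mem_coordBox.mp hp i
          have := abs_le.mp (hρδ p.2 i)
          rw [map_add, Finsupp.add_apply]
          omega
        · rintro ⟨x, q⟩ hp ⟨x', q'⟩ hp' (h : x + ρ q = x' + ρ q')
          have hx := (mem_filter.mp (mem_product.mp hp).1).2
          have hx' := (mem_filter.mp (mem_product.mp hp').1).2
          have hq : q = q' := by rw [← hclass hx q, h, hclass hx' q']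
          subst hq
          rw [add_right_cancel h]
    _ = (M + 2 * δ) ^ Fintype.card ι := by rw [card_coordBox]; congr 1; omega

theorem le_card_coordBox_filter_mul_index [H.FiniteIndex]
    (hδ : ∀ q : A ⧸ H, ∃ r : A, (r : A ⧸ H) = q ∧ ∀ i, |b.repr r i| ≤ δ) (v : A) (M : ℕ) :
    (M - 2 * δ) ^ Fintype.card ι ≤ #{x ∈ coordBox b 0 M | v + x ∈ H} * H.index := by
  have := Fintype.ofFinite (A ⧸ H)
  choose ρ hρ hρδ using hδ
  calc (M - 2 * δ) ^ Fintype.card ι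
      = #(coordBox b δ (M - δ)) := by rw [card_coordBox]; congr 1; omega
    _ ≤ #({x ∈ coordBox b 0 M | v + x ∈ H} ×ˢ (univ : Finset (A ⧸ H))) := by
        refine card_le_card_of_injOn (fun y => (y - ρ (v + y : A), (v + y : A))) (fun y hy => ?_) ?_
        · refine mem_coe.mpr (mem_product.mpr ⟨mem_filter.mpr ⟨?_, ?_⟩, mem_univ _⟩)
          · refine mem_coordBox.mpr fun i => ?_
            have := mem_coordBox.mp hy i
            have := abs_le.mp (hρδ (v + y : A) i)
            rw [map_sub, Finsupp.sub_apply]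
            omega
          · rw [← QuotientAddGroup.eq_zero_iff, ← add_sub_assoc, QuotientAddGroup.mk_sub, hρ,
              sub_self]
        · rintro y - y' - h
          obtain ⟨hy, hq⟩ := Prod.mk.inj h
          rw [hq] at hy
          exact sub_left_injective hy
    _ = #{x ∈ coordBox b 0 M | v + x ∈ H} * H.index := by
        rw [card_product, card_univ, ← Nat.card_eq_fintype_card]; rfl

theorem abs_card_coordBox_filter_mul_index_sub_le [H.FiniteIndex]
    (hδ : ∀ q : A ⧸ H, ∃ r : A, (r : A ⧸ H) = q ∧ ∀ i, |b.repr r i| ≤ δ) (v : A) (M : ℕ) :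
    |(#{x ∈ coordBox b 0 M | v + x ∈ H} * H.index : ℝ) - (M : ℝ) ^ Fintype.card ι| ≤
      2 * δ * Fintype.card ι * (M + 2 * δ : ℝ) ^ (Fintype.card ι - 1) := by
  have := abs_natCast_sub_pow_le (le_card_coordBox_filter_mul_index hδ v M)
    (card_coordBox_filter_mul_index_le hδ v M)
  exact_mod_cast this

end CoordBox

section House

open Module

theorem exists_abs_repr_le_mul_house :
    ∃ C : ℝ, 0 ≤ C ∧ ∀ (x : K) i, |((integralBasis K).repr x i : ℝ)| ≤ C * house x := by
  let coord := (canonicalEmbedding.latticeBasis K).equivFun.toLinearMap.toContinuousLinearMap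
  refine ⟨‖coord‖, coord.opNorm_nonneg, fun x i => ?_⟩
  calc |((integralBasis K).repr x i : ℝ)| = ‖coord (canonicalEmbedding K x) i‖ := by
        simp only [coord, LinearMap.coe_toContinuousLinearMap', LinearEquiv.coe_coe,
          Basis.equivFun_apply, canonicalEmbedding.integralBasis_repr_apply, Complex.norm_ratCast]
    _ ≤ ‖coord (canonicalEmbedding K x)‖ := norm_le_pi_norm _ i
    _ ≤ ‖coord‖ * house x := coord.le_opNorm _

theorem exists_house_le_mul_of_abs_repr_le :
    ∃ C : ℝ, 0 ≤ C ∧ ∀ (x : K) (B : ℝ), (∀ i, |((integralBasis K).repr x i : ℝ)| ≤ B) →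
      house x ≤ C * B := by
  refine ⟨∑ i, house (integralBasis K i), sum_nonneg fun _ _ => house_nonneg _, fun x B hB => ?_⟩
  have house_smul (q : ℚ) (y : K) : house (q • y) = |(q : ℝ)| * house y := by
    rw [house, house, map_rat_smul, ← Rat.cast_smul_eq_qsmul ℂ, norm_smul, Complex.norm_ratCast]
  calc house x = house (∑ i, (integralBasis K).repr x i • integralBasis K i) := by
        rw [Basis.sum_repr]
    _ ≤ ∑ i, |((integralBasis K).repr x i : ℝ)| * house (integralBasis K i) := by
        simpa only [house_smul] using house_sum_le_sum_house univ
          fun i => (integralBasis K).repr x i • integralBasis K i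
    _ ≤ ∑ i, B * house (integralBasis K i) :=
        sum_le_sum fun i _ => mul_le_mul_of_nonneg_right (hB i) (house_nonneg _)
    _ = (∑ i, house (integralBasis K i)) * B := by rw [← mul_sum, mul_comm]

theorem integralBasis_repr_coe (x : 𝓞 K) (i) :
    ((integralBasis K).repr (x : K) i : ℝ) = (RingOfIntegers.basis K).repr x i := by
  rw [integralBasis_repr_apply]
  simp

theorem exists_house_sub_le : ∃ C : ℝ, ∀ x : K, ∃ q : 𝓞 K, house (x - q) ≤ C := by
  obtain ⟨C, -, hC⟩ := exists_house_le_mul_of_abs_repr_le K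
  refine ⟨C * 1, fun x => ?_⟩
  let q := (RingOfIntegers.basis K).equivFun.symm fun i => ⌊(integralBasis K).repr x i⌋
  refine ⟨q, hC _ _ fun i => ?_⟩
  have hq : (integralBasis K).repr (q : K) i = ⌊(integralBasis K).repr x i⌋ := by
    rw [integralBasis_repr_apply, ← Basis.equivFun_apply, LinearEquiv.apply_symm_apply]
    rfl
  rw [map_sub, Finsupp.sub_apply, hq, Int.self_sub_floor, abs_of_nonneg (by positivity)]
  exact_mod_cast (Int.fract_lt_one _).le

theorem exists_ne_zero_mem_ideal_house_le :
    ∃ C : ℝ, 0 ≤ C ∧ ∀ I : Ideal (𝓞 K), I ≠ ⊥ →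
      ∃ γ ∈ I, γ ≠ 0 ∧ house (γ : K) ≤ C * (Ideal.absNorm I : ℝ) ^ (1 / finrank ℚ K : ℝ) := by
  obtain ⟨C, hC₀, hC⟩ := exists_house_le_mul_of_abs_repr_le K
  refine ⟨C, hC₀, fun I hI => ?_⟩
  set s := ⌊(Ideal.absNorm I : ℝ) ^ (1 / finrank ℚ K : ℝ)⌋₊
  have hindex : (Submodule.toAddSubgroup I).index = Ideal.absNorm I := rfl
  have : (Submodule.toAddSubgroup I).FiniteIndex :=
    ⟨by rwa [hindex, Ne, Ideal.absNorm_eq_zero_iff]⟩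
  have hs : Ideal.absNorm I < (s + 1) ^ finrank ℚ K := by
    have : (Ideal.absNorm I : ℝ) ^ (1 / finrank ℚ K : ℝ) < s + 1 := Nat.lt_floor_add_one _
    rw [one_div, Real.rpow_inv_lt_iff_of_pos (by positivity) (by positivity)
      (by exact_mod_cast finrank_pos), Real.rpow_natCast] at this
    exact_mod_cast this
  rw [finrank_eq_card_basis (integralBasis K), ← hindex] at hs
  obtain ⟨γ, hγI, hγ₀, hγs⟩ := exists_ne_zero_mem_abs_repr_le (RingOfIntegers.basis K) hs
  refine ⟨γ, hγI, hγ₀, hC _ _ fun i => ?_⟩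
  rw [integralBasis_repr_coe]
  refine le_trans ?_ (Nat.floor_le (by positivity))
  exact_mod_cast hγs i

/-- Multiplication by a short element `γ` of `I` maps `𝓞 K` into `I`, and `γ⁻¹ x` is at bounded
distance from `𝓞 K`. -/
theorem exists_sub_mem_abs_repr_le :
    ∃ C : ℝ, 0 ≤ C ∧ ∀ I : Ideal (𝓞 K), I ≠ ⊥ → ∀ x : 𝓞 K, ∃ r : 𝓞 K, x - r ∈ I ∧
      ∀ i, |((RingOfIntegers.basis K).repr r i : ℝ)| ≤
        C * (Ideal.absNorm I : ℝ) ^ (1 / finrank ℚ K : ℝ) := by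
  obtain ⟨C₁, hC₁, hrepr⟩ := exists_abs_repr_le_mul_house K
  obtain ⟨C₂, hround⟩ := exists_house_sub_le K
  obtain ⟨C₃, hC₃, hshort⟩ := exists_ne_zero_mem_ideal_house_le K
  have hC₂ : 0 ≤ C₂ := (house_nonneg _).trans (hround 0).choose_spec
  refine ⟨C₁ * (C₃ * C₂), by positivity, fun I hI x => ?_⟩
  obtain ⟨γ, hγI, hγ₀, hγ⟩ := hshort I hI
  obtain ⟨q, hq⟩ := hround (x / γ)
  refine ⟨x - γ * q, by simpa using I.mul_mem_right q hγI, fun i => ?_⟩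
  have hγK : (γ : K) ≠ 0 := by exact_mod_cast hγ₀
  have hr : ((x - γ * q : 𝓞 K) : K) = γ * (x / γ - q) := by push_cast; field_simp
  rw [← integralBasis_repr_coe]
  calc |((integralBasis K).repr ((x - γ * q : 𝓞 K) : K) i : ℝ)|
      ≤ C₁ * house ((x - γ * q : 𝓞 K) : K) := hrepr _ i
    _ ≤ C₁ * (house (γ : K) * house (x / γ - q : K)) := by rw [hr]; gcongr; exact house_mul_le _ _
    _ ≤ C₁ * ((C₃ * (Ideal.absNorm I : ℝ) ^ (1 / finrank ℚ K : ℝ)) * C₂) := by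
        gcongr; exact house_nonneg _
    _ = C₁ * (C₃ * C₂) * (Ideal.absNorm I : ℝ) ^ (1 / finrank ℚ K : ℝ) := by ring

theorem absNorm_span_singleton_eq_prod_norm (x : 𝓞 K) :
    (Ideal.absNorm (Ideal.span {x}) : ℝ) = ∏ σ : K →ₐ[ℚ] ℂ, ‖σ (x : K)‖ := by
  rw [← norm_prod, ← Algebra.norm_eq_prod_embeddings ℚ ℂ (x : K), ← Algebra.coe_norm_int,
    Ideal.absNorm_span_singleton]
  simp [Nat.cast_natAbs]

/-- Far enough along the diagonal `ℤ ⊆ 𝓞 K`, all conjugates of all elements of a cube of side `M`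
have size comparable to `M`. -/
theorem exists_absNorm_add_mem_Icc :
    ∃ T B : ℕ, B ≠ 0 ∧ ∀ M : ℕ, ∀ x ∈ coordBox (RingOfIntegers.basis K) 0 M,
      Ideal.absNorm (Ideal.span {((T * M : ℕ) : 𝓞 K) + x}) ∈
        Set.Icc (M ^ finrank ℚ K) ((B * M) ^ finrank ℚ K) := by
  obtain ⟨C, -, hC⟩ := exists_house_le_mul_of_abs_repr_le K
  set T := ⌈C⌉₊ + 1 with hT
  have hCT : C + 1 ≤ T := by rw [hT]; push_cast; linarith [Nat.le_ceil C]
  refine ⟨T, 2 * T, by positivity, fun M x hx => ?_⟩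
  have hM : (0 : ℝ) ≤ M := M.cast_nonneg
  have hx' : house (x : K) ≤ C * M := hC _ _ fun i => by
    have := mem_coordBox.mp hx i
    rw [integralBasis_repr_coe, abs_of_nonneg (by exact_mod_cast this.1)]
    exact_mod_cast this.2.le
  have hσ (σ : K →ₐ[ℚ] ℂ) : (M : ℝ) ≤ ‖σ ((((T * M : ℕ) : 𝓞 K) + x : 𝓞 K) : K)‖ ∧
      ‖σ ((((T * M : ℕ) : 𝓞 K) + x : 𝓞 K) : K)‖ ≤ (2 * T * M : ℕ) := by
    have hσx : ‖σ (x : K)‖ ≤ C * M := (norm_embedding_le_house _ σ.toRingHom).trans hx'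
    have hTM : ‖((T * M : ℕ) : ℂ)‖ = T * M := by rw [Complex.norm_natCast]; push_cast; rfl
    have hlow := norm_sub_le_norm_add ((T * M : ℕ) : ℂ) (σ (x : K))
    have hhigh := norm_add_le ((T * M : ℕ) : ℂ) (σ (x : K))
    have hadd : σ ((((T * M : ℕ) : 𝓞 K) + x : 𝓞 K) : K) = ((T * M : ℕ) : ℂ) + σ (x : K) := by
      simp
    rw [hadd]
    rw [hTM] at hlow hhigh
    push_cast at hlow hhigh ⊢
    constructor <;> nlinarith
  have hd : finrank ℚ K = #(univ : Finset (K →ₐ[ℚ] ℂ)) := by rw [card_univ, AlgHom.card]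
  rw [hd, ← prod_const, ← prod_const, Set.mem_Icc]
  constructor
  · rw [← Nat.cast_le (α := ℝ), absNorm_span_singleton_eq_prod_norm, Nat.cast_prod]
    exact prod_le_prod (fun _ _ => hM) fun σ _ => (hσ σ).1
  · rw [← Nat.cast_le (α := ℝ), absNorm_span_singleton_eq_prod_norm, Nat.cast_prod]
    exact prod_le_prod (fun _ _ => norm_nonneg _) fun σ _ => (hσ σ).2

theorem exists_abs_card_coordBox_filter_mem_sub_le (B : ℕ) :
    ∃ E : ℝ, 0 ≤ E ∧ ∀ (v : 𝓞 K) (M : ℕ) (I : Ideal (𝓞 K)), I ≠ ⊥ →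
      Ideal.absNorm I ≤ (B * M) ^ finrank ℚ K →
      |(#{x ∈ coordBox (RingOfIntegers.basis K) 0 M | v + x ∈ I} : ℝ) -
          (M : ℝ) ^ finrank ℚ K / Ideal.absNorm I| ≤
        E * (M : ℝ) ^ (finrank ℚ K - 1) *
          (Ideal.absNorm I : ℝ) ^ (1 / finrank ℚ K - 1 : ℝ) := by
  obtain ⟨C, hC₀, hC⟩ := exists_sub_mem_abs_repr_le K
  set d := finrank ℚ K with hd
  have hd₀ : (0 : ℝ) < d := by exact_mod_cast finrank_pos
  refine ⟨2 * C * d * (1 + 2 * (C * B)) ^ (d - 1), by positivity, fun v M I hI hIB => ?_⟩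
  set N := Ideal.absNorm I
  have hindex : (Submodule.toAddSubgroup I).index = N := rfl
  have hN : N ≠ 0 := by rwa [Ne, Ideal.absNorm_eq_zero_iff]
  have hN' : (0 : ℝ) < N := by positivity
  have : (Submodule.toAddSubgroup I).FiniteIndex := ⟨hN⟩
  have hroot : (N : ℝ) ^ (1 / d : ℝ) ≤ B * M := by
    rw [one_div, Real.rpow_inv_le_iff_of_pos hN'.le (by positivity) hd₀, Real.rpow_natCast]
    exact_mod_cast hIB
  set δ := ⌊C * (N : ℝ) ^ (1 / d : ℝ)⌋₊
  have hδ : (δ : ℝ) ≤ C * (N : ℝ) ^ (1 / d : ℝ) := Nat.floor_le (by positivity)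
  have hreps (q : 𝓞 K ⧸ Submodule.toAddSubgroup I) : ∃ r : 𝓞 K, (r : 𝓞 K ⧸ _) = q ∧
      ∀ i, |(RingOfIntegers.basis K).repr r i| ≤ δ := by
    obtain ⟨x, rfl⟩ := QuotientAddGroup.mk_surjective q
    obtain ⟨r, hrI, hr⟩ := hC I hI x
    refine ⟨r, QuotientAddGroup.eq.mpr (by rwa [neg_add_eq_sub]), fun i => ?_⟩
    rw [← Int.natCast_natAbs, Nat.cast_le]
    exact Nat.le_floor (by rw [Nat.cast_natAbs]; exact_mod_cast hr i)
  have hcount := abs_card_coordBox_filter_mul_index_sub_le hreps v M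
  rw [hindex, ← finrank_eq_card_basis (integralBasis K), ← hd] at hcount
  rw [sub_div' hN'.ne', abs_div, abs_of_pos hN', div_le_iff₀ hN']
  calc _ ≤ 2 * δ * d * (M + 2 * δ : ℝ) ^ (d - 1) := hcount
    _ ≤ 2 * (C * (N : ℝ) ^ (1 / d : ℝ)) * d * ((1 + 2 * (C * B)) * M) ^ (d - 1) := by
        gcongr
        linarith [hδ.trans (mul_le_mul_of_nonneg_left hroot hC₀)]
    _ = _ := by
        rw [Real.rpow_sub_one hN'.ne', mul_pow]
        field_simp

end House

section IdealVonMangoldt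

open Module UniqueFactorizationMonoid

variable {R : Type*} [CommRing R] [IsDedekindDomain R]

theorem ideal_radical_pow_of_prime {P : Ideal R} (hP : Prime P) {k : ℕ} (hk : k ≠ 0) :
    (P ^ k).radical = P := by
  rw [Ideal.radical_pow _ hk, (Ideal.isPrime_of_prime hP).radical]

variable [Module.Free ℤ R]

/-- The von Mangoldt function on the ideals of a Dedekind domain: `log (absNorm P)` at the powers
`P ^ k`, `k ≠ 0`, of a nonzero prime `P`, and `0` at all other ideals. The prime is recovered from
its power as the radical. -/
noncomputable def idealVonMangoldt (I : Ideal R) : ℝ :=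
  if IsPrimePow I then Real.log (Ideal.absNorm I.radical) else 0

theorem idealVonMangoldt_nonneg (I : Ideal R) : 0 ≤ idealVonMangoldt I := by
  unfold idealVonMangoldt
  split_ifs
  exacts [Real.log_natCast_nonneg _, le_rfl]

theorem idealVonMangoldt_pow_of_prime {P : Ideal R} (hP : Prime P) {k : ℕ} (hk : k ≠ 0) :
    idealVonMangoldt (P ^ k) = Real.log (Ideal.absNorm P) := by
  rw [idealVonMangoldt, if_pos (hP.isPrimePow.pow hk), ideal_radical_pow_of_prime hP hk]

variable [Module.Finite ℤ R]

theorem log_absNorm_eq_sum_count_normalizedFactors {J : Ideal R} (hJ : J ≠ ⊥) :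
    Real.log (Ideal.absNorm J) = ∑ P ∈ (normalizedFactors J).toFinset,
      (normalizedFactors J).count P * Real.log (Ideal.absNorm P) := by
  have hN (P : Ideal R) (hP : P ∈ (normalizedFactors J).toFinset) :
      ((Ideal.absNorm P : ℝ) ^ (normalizedFactors J).count P) ≠ 0 :=
    pow_ne_zero _ <| Nat.cast_ne_zero.mpr <| mt Ideal.absNorm_eq_zero_iff.mp
      (prime_of_normalized_factor P (Multiset.mem_toFinset.mp hP)).ne_zero
  conv_lhs => rw [← Ideal.prod_normalizedFactors_eq_self hJ, prod_multiset_count]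
  simp only [map_prod, map_pow, Nat.cast_prod, Nat.cast_pow, Real.log_prod hN, Real.log_pow]

theorem two_le_absNorm {P : Ideal R} (hP : Prime P) : 2 ≤ Ideal.absNorm P := by
  have h₀ := mt Ideal.absNorm_eq_zero_iff.mp hP.ne_zero
  have h₁ := mt Ideal.absNorm_eq_one_iff.mp (Ideal.isPrime_of_prime hP).ne_top
  omega

theorem isPrimePow_absNorm_pow_and_minFac_mem {P : Ideal R} (hP : Prime P) {k : ℕ} (hk : k ≠ 0) :
    IsPrimePow (Ideal.absNorm (P ^ k)) ∧ ((Ideal.absNorm (P ^ k)).minFac : R) ∈ P := by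
  have := (Ideal.isPrime_of_prime hP).isMaximal hP.ne_zero
  obtain ⟨p, m, hm, hpP, hp, h⟩ := Ideal.exists_prime_and_absNorm_eq_pow P
  have hmk : m * k ≠ 0 := mul_ne_zero hm.ne' hk
  rw [map_pow, h, ← pow_mul, hp.pow_minFac hmk]
  exact ⟨hp.isPrimePow.pow hmk, hpP⟩

variable [CharZero R]

variable (R) in
/-- The finite set of ideals of a given norm. -/
noncomputable def idealsOfNorm (n : ℕ) : Finset (Ideal R) :=
  (Ideal.finite_setOfPred_absNorm_eq n).toFinset

@[simp]
theorem mem_idealsOfNorm {n : ℕ} {I : Ideal R} : I ∈ idealsOfNorm R n ↔ Ideal.absNorm I = n := by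
  simp [idealsOfNorm]

theorem sum_idealVonMangoldt_of_le {J : Ideal R} (hJ : J ≠ ⊥) {X : ℕ}
    (hX : Ideal.absNorm J ≤ X) :
    ∑ n ∈ Ioc 0 X, ∑ I ∈ idealsOfNorm R n with J ≤ I, idealVonMangoldt I =
      Real.log (Ideal.absNorm J) := by
  set F := normalizedFactors J with hF
  have hdvd {P : Ideal R} (hP : Prime P) (k : ℕ) : J ≤ P ^ k ↔ k ≤ F.count P := by
    rw [← Ideal.dvd_iff_le, pow_dvd_iff_le_emultiplicity,
      emultiplicity_eq_count_normalizedFactors hP.irreducible hJ, normalize_eq, Nat.cast_le]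
  have hprime {P : Ideal R} (hP : P ∈ F.toFinset) : Prime P :=
    prime_of_normalized_factor P (Multiset.mem_toFinset.mp hP)
  rw [log_absNorm_eq_sum_count_normalizedFactors hJ, ← hF, sum_sigma']
  calc _ = ∑ q ∈ F.toFinset.sigma fun P => Icc 1 (F.count P), Real.log (Ideal.absNorm q.1) := ?_
    _ = _ := by simp [sum_sigma]
  symm
  refine sum_of_injOn (fun q => ⟨Ideal.absNorm (q.1 ^ q.2), q.1 ^ q.2⟩) ?_ ?_ ?_ ?_
  · rintro ⟨P, k⟩ hP ⟨P', k'⟩ hP' h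
    simp only [mem_coe, mem_sigma, mem_Icc] at hP hP'
    have h' : P ^ k = P' ^ k' := congrArg Sigma.snd h
    obtain rfl : P = P' := by
      rw [← ideal_radical_pow_of_prime (hprime hP.1) (by omega : k ≠ 0), h',
        ideal_radical_pow_of_prime (hprime hP'.1) (by omega)]
    rw [(P.pow_right_strictAnti (hprime hP.1).ne_zero
      (Ideal.isPrime_of_prime (hprime hP.1)).ne_top).injective h']
  · rintro ⟨P, k⟩ hP
    simp only [mem_coe, mem_sigma, mem_Icc] at hP
    have hle := (hdvd (hprime hP.1) k).mpr hP.2.2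
    have hN := Ideal.absNorm_dvd_absNorm_of_le hle
    have hJ₀ : 0 < Ideal.absNorm J := Nat.pos_of_ne_zero (mt Ideal.absNorm_eq_zero_iff.mp hJ)
    simpa [hle, -map_pow] using ⟨Nat.pos_of_dvd_of_pos hN hJ₀, (Nat.le_of_dvd hJ₀ hN).trans hX⟩
  · rintro ⟨n, I⟩ hI hnot
    simp only [mem_sigma, mem_filter, mem_idealsOfNorm] at hI
    refine if_neg fun ⟨P, k, hP, hk, hPk⟩ => hnot ?_
    subst hPk
    have hcount := (hdvd hP k).mp hI.2.2
    have hmem : P ∈ normalizedFactors J := Multiset.count_pos.mp (hk.trans_le hcount)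
    exact ⟨⟨P, k⟩, by simpa [hmem] using ⟨hmem, hk, hcount⟩, by simp only [hI.2.1]⟩
  · rintro ⟨P, k⟩ hP
    simp only [mem_sigma, mem_Icc] at hP
    exact (idealVonMangoldt_pow_of_prime (hprime hP.1) (Nat.one_le_iff_ne_zero.mp hP.2.1)).symm

theorem prod_absNorm_radical_dvd (n : ℕ) :
    ∏ I ∈ idealsOfNorm R n with IsPrimePow I, Ideal.absNorm I.radical ∣
      n.minFac ^ finrank ℤ R := by
  set S := {I ∈ idealsOfNorm R n | IsPrimePow I} with hS
  have hmem {I : Ideal R} (hI : I ∈ S) : Prime I.radical ∧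
      ∃ k ≠ 0, I = I.radical ^ k ∧ Ideal.absNorm I.radical ^ k = n := by
    simp only [hS, mem_filter, mem_idealsOfNorm] at hI
    obtain ⟨hn, P, k, hP, hk, rfl⟩ := hI
    rw [ideal_radical_pow_of_prime hP hk.ne']
    exact ⟨hP, k, hk.ne', rfl, by rwa [← map_pow]⟩
  have hinj : Set.InjOn Ideal.radical (S : Set (Ideal R)) := fun I hI I' hI' h => by
    obtain ⟨hP, k, -, hIk, hk⟩ := hmem hI
    obtain ⟨-, k', -, hIk', hk'⟩ := hmem hI'
    rw [hIk, hIk', ← h, Nat.pow_right_injective (two_le_absNorm hP) (hk.trans (h ▸ hk').symm)]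
  have hdvd : ∏ P ∈ S.image Ideal.radical, P ∣ Ideal.span {(n.minFac : R)} := by
    refine prod_primes_dvd _ (fun P hP => ?_) fun P hP => ?_ <;>
      obtain ⟨I, hI, rfl⟩ := mem_image.mp hP
    · exact (hmem hI).1
    · obtain ⟨hrad, k, hk, -, rfl⟩ := hmem hI
      rw [← map_pow]
      exact Ideal.dvd_span_singleton.mpr (isPrimePow_absNorm_pow_and_minFac_mem hrad hk).2
  simpa only [Ideal.absNorm_span_natCast, map_prod, prod_image hinj] using
    Ideal.absNorm_dvd_absNorm_of_le (Ideal.dvd_iff_le.mp hdvd)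

theorem sum_idealsOfNorm_idealVonMangoldt_le (n : ℕ) :
    ∑ I ∈ idealsOfNorm R n, idealVonMangoldt I ≤ finrank ℤ R * Λ n := by
  set S := {I ∈ idealsOfNorm R n | IsPrimePow I}
  have hsum : ∑ I ∈ idealsOfNorm R n, idealVonMangoldt I =
      ∑ I ∈ S, Real.log (Ideal.absNorm I.radical) := (sum_filter ..).symm
  have hne (I : Ideal R) (hI : I ∈ S) : Ideal.absNorm I.radical ≠ 0 := by
    obtain ⟨-, P, k, hP, hk, rfl⟩ := mem_filter.mp hI
    rw [ideal_radical_pow_of_prime hP hk.ne']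
    exact mt Ideal.absNorm_eq_zero_iff.mp hP.ne_zero
  rcases S.eq_empty_or_nonempty with hE | ⟨I, hI⟩
  · rw [hsum, hE, sum_empty]
    exact mul_nonneg (Nat.cast_nonneg _) vonMangoldt_nonneg
  have hn : IsPrimePow n := by
    obtain ⟨hI, P, k, hP, hk, rfl⟩ := mem_filter.mp hI
    exact mem_idealsOfNorm.mp hI ▸ (isPrimePow_absNorm_pow_and_minFac_mem hP hk.ne').1
  rw [hsum, vonMangoldt_apply, if_pos hn, ← Real.log_pow,
    ← Real.log_prod fun I hI => Nat.cast_ne_zero.mpr (hne I hI)]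
  have hprod : 0 < ∏ I ∈ S, Ideal.absNorm I.radical :=
    prod_pos fun I hI => Nat.pos_of_ne_zero (hne I hI)
  have hpow : 0 < n.minFac ^ finrank ℤ R := pow_pos n.minFac_pos _
  gcongr
  · exact_mod_cast hprod
  · exact_mod_cast Nat.le_of_dvd hpow (prod_absNorm_radical_dvd n)

end IdealVonMangoldt

section Mertens

open Module

section DedekindDomain

variable {R : Type*} [CommRing R] [IsDedekindDomain R] [Module.Free ℤ R] [Module.Finite ℤ R]
  [CharZero R]

theorem sum_log_absNorm_span_eq {ι : Type*} {s : Finset ι} {f : ι → R} {X : ℕ}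
    (hf : ∀ x ∈ s, f x ≠ 0) (hX : ∀ x ∈ s, Ideal.absNorm (Ideal.span {f x}) ≤ X) :
    ∑ x ∈ s, Real.log (Ideal.absNorm (Ideal.span {f x})) =
      ∑ n ∈ Ioc 0 X, ∑ I ∈ idealsOfNorm R n, idealVonMangoldt I * #{x ∈ s | f x ∈ I} := by
  have hlog (x : ι) (hx : x ∈ s) : Real.log (Ideal.absNorm (Ideal.span {f x})) =
      ∑ n ∈ Ioc 0 X, ∑ I ∈ idealsOfNorm R n, if f x ∈ I then idealVonMangoldt I else 0 := by
    rw [← sum_idealVonMangoldt_of_le (mt Ideal.span_singleton_eq_bot.mp (hf x hx)) (hX x hx)]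
    simp only [Ideal.span_singleton_le_iff_mem, sum_filter]
  rw [sum_congr rfl hlog, sum_comm]
  refine sum_congr rfl fun n _ => ?_
  rw [sum_comm]
  refine sum_congr rfl fun I _ => ?_
  rw [← sum_filter, sum_const, nsmul_eq_mul, mul_comm]

theorem abs_sum_idealVonMangoldt_mul_sub_le {w : Ideal R → ℝ} {c D θ : ℝ} {X : ℕ} (hD : 0 ≤ D)
    (h₀ : 0 < θ) (h₁ : θ ≤ 1) (hw : ∀ I : Ideal R, I ≠ ⊥ → Ideal.absNorm I ≤ X →
      |w I - c / Ideal.absNorm I| ≤ D * (Ideal.absNorm I : ℝ) ^ (θ - 1)) :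
    |∑ n ∈ Ioc 0 X, ∑ I ∈ idealsOfNorm R n, idealVonMangoldt I * w I -
        c * ∑ n ∈ Ioc 0 X, (∑ I ∈ idealsOfNorm R n, idealVonMangoldt I) / n| ≤
      D * (finrank ℤ R * ((Real.log 4 + 4) * ((X : ℝ) ^ θ / θ))) := by
  have hterm (n : ℕ) (hn : n ∈ Ioc 0 X) (I : Ideal R) (hI : I ∈ idealsOfNorm R n) :
      |idealVonMangoldt I * w I - c * (idealVonMangoldt I / n)| ≤
        idealVonMangoldt I * (D * (n : ℝ) ^ (θ - 1)) := by
    rw [mem_idealsOfNorm] at hI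
    subst hI
    rw [mem_Ioc] at hn
    rw [mul_div_left_comm, ← mul_sub, abs_mul, abs_of_nonneg (idealVonMangoldt_nonneg I)]
    exact mul_le_mul_of_nonneg_left (hw I (mt Ideal.absNorm_eq_zero_iff.mpr hn.1.ne') hn.2)
      (idealVonMangoldt_nonneg I)
  simp only [sum_div, mul_sum, ← sum_sub_distrib]
  calc _ ≤ ∑ n ∈ Ioc 0 X, ∑ I ∈ idealsOfNorm R n, idealVonMangoldt I * (D * (n : ℝ) ^ (θ - 1)) :=
        (abs_sum_le_sum_abs ..).trans <| sum_le_sum fun n hn =>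
          (abs_sum_le_sum_abs ..).trans <| sum_le_sum (hterm n hn)
    _ ≤ ∑ n ∈ Ioc 0 X, finrank ℤ R * Λ n * (D * (n : ℝ) ^ (θ - 1)) := by
        simp only [← sum_mul]
        gcongr with n
        exact sum_idealsOfNorm_idealVonMangoldt_le n
    _ = D * (finrank ℤ R * ∑ n ∈ Ioc 0 X, Λ n * (n : ℝ) ^ (θ - 1)) := by
        rw [mul_sum, mul_sum]
        exact sum_congr rfl fun n _ => by ring
    _ ≤ _ := by
        gcongr
        exact sum_vonMangoldt_mul_rpow_sub_one_le h₀ h₁ X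

end DedekindDomain

theorem exists_abs_sum_idealVonMangoldt_mul_card_sub_le (B : ℕ) :
    ∃ E : ℝ, ∀ (v : 𝓞 K) (M : ℕ),
      |∑ n ∈ Ioc 0 ((B * M) ^ finrank ℚ K), ∑ I ∈ idealsOfNorm (𝓞 K) n,
          idealVonMangoldt I * #{x ∈ coordBox (RingOfIntegers.basis K) 0 M | v + x ∈ I} -
        (M : ℝ) ^ finrank ℚ K * ∑ n ∈ Ioc 0 ((B * M) ^ finrank ℚ K),
          (∑ I ∈ idealsOfNorm (𝓞 K) n, idealVonMangoldt I) / n| ≤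
      (M : ℝ) ^ finrank ℚ K * E := by
  obtain ⟨E, hE₀, hE⟩ := exists_abs_card_coordBox_filter_mem_sub_le K B
  rw [← RingOfIntegers.rank K] at hE ⊢
  set d := finrank ℤ (𝓞 K)
  have hd₀ : 0 < d := finrank_pos
  have hd₁ : (1 / d : ℝ) ≤ 1 := by
    rw [div_le_one (by positivity)]; exact_mod_cast hd₀
  have hroot (M : ℕ) : (((B * M) ^ d : ℕ) : ℝ) ^ (1 / d : ℝ) = B * M := by
    rw [one_div]; push_cast
    exact Real.pow_rpow_inv_natCast (by positivity) hd₀.ne'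
  refine ⟨E * (d * ((Real.log 4 + 4) * (B * d))), fun v M => ?_⟩
  calc _ ≤ E * (M : ℝ) ^ (d - 1) *
        (d * ((Real.log 4 + 4) * ((((B * M) ^ d : ℕ) : ℝ) ^ (1 / d : ℝ) / (1 / d)))) :=
        abs_sum_idealVonMangoldt_mul_sub_le (by positivity) (by positivity) hd₁ (hE v M)
    _ = (M : ℝ) ^ (d - 1 + 1) * (E * (d * ((Real.log 4 + 4) * (B * d)))) := by
        rw [hroot, pow_succ]; field_simp
    _ = _ := by rw [Nat.sub_add_cancel hd₀]

theorem exists_abs_sum_idealVonMangoldt_div_sub_log_le :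
    ∃ C : ℝ, ∀ X : ℕ, 1 ≤ X →
      |∑ n ∈ Ioc 0 X, (∑ I ∈ idealsOfNorm (𝓞 K) n, idealVonMangoldt I) / n - Real.log X| ≤ C := by
  obtain ⟨T, B, hB, hbox⟩ := exists_absNorm_add_mem_Icc K
  obtain ⟨E, hE⟩ := exists_abs_sum_idealVonMangoldt_mul_card_sub_le K B
  set d := finrank ℚ K with hd
  refine exists_abs_sub_log_le_of_monotone (c := B ^ d) (d := d)
    (D := E + Real.log (B ^ d)) ?_ (by positivity) finrank_pos.ne' fun M hM => ?_
  · refine fun X Y hXY => sum_le_sum_of_subset_of_nonneg (Ioc_subset_Ioc_right hXY) fun n _ _ => ?_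
    exact div_nonneg (sum_nonneg fun I _ => idealVonMangoldt_nonneg I) n.cast_nonneg
  set A := coordBox (RingOfIntegers.basis K) 0 M
  set N : 𝓞 K → ℕ := fun x => Ideal.absNorm (Ideal.span {((T * M : ℕ) : 𝓞 K) + x})
  have hMd : (0 : ℝ) < (M : ℝ) ^ d := by positivity
  have hA : (#A : ℝ) = (M : ℝ) ^ d := by
    rw [card_coordBox, ← finrank_eq_card_basis (RingOfIntegers.basis K), RingOfIntegers.rank]
    simp [hd]
  have hne (x : 𝓞 K) (hx : x ∈ A) : ((T * M : ℕ) : 𝓞 K) + x ≠ 0 := fun h => by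
    have := (hbox M x hx).1
    rw [h, Ideal.span_singleton_zero, Ideal.absNorm_bot] at this
    exact (pow_pos hM d).not_ge this
  have hsum := sum_log_absNorm_span_eq hne fun x hx => (hbox M x hx).2
  have hlog : |∑ x ∈ A, Real.log (N x) - (M : ℝ) ^ d * Real.log (M ^ d)| ≤
      (M : ℝ) ^ d * Real.log (B ^ d) := by
    rw [← hA, ← nsmul_eq_mul, ← nsmul_eq_mul, ← sum_const, ← sum_const, ← sum_sub_distrib, hA]
    refine (abs_sum_le_sum_abs ..).trans (sum_le_sum fun x hx => ?_)
    obtain ⟨hlow, hhigh⟩ := hbox M x hx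
    have hlow' : (M : ℝ) ^ d ≤ N x := by exact_mod_cast hlow
    have hhigh' : (N x : ℝ) ≤ B ^ d * M ^ d := by rw [← mul_pow]; exact_mod_cast hhigh
    rw [abs_of_nonneg (sub_nonneg.mpr (Real.log_le_log hMd hlow')), sub_le_iff_le_add,
      ← Real.log_mul (by positivity) hMd.ne']
    exact Real.log_le_log (hMd.trans_le hlow') hhigh'
  have hcount := hE ((T * M : ℕ) : 𝓞 K) M
  rw [abs_sub_comm] at hcount
  rw [hsum] at hlog
  rw [← mul_pow, ← mul_le_mul_iff_right₀ hMd]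
  nth_rw 1 [← abs_of_pos hMd]
  rw [← abs_mul, mul_sub, mul_add]
  exact (abs_sub_le _ _ _).trans (add_le_add hcount hlog)

section DedekindDomain

variable (R : Type*) [CommRing R] [IsDedekindDomain R] [Module.Free ℤ R] [Module.Finite ℤ R]
  [CharZero R]

/-- The number of nonzero prime ideals of norm `n`. -/
noncomputable def primeIdealCount (n : ℕ) : ℕ := #{P ∈ idealsOfNorm R n | Prime P}

theorem primeIdealCount_mul_log_eq (n : ℕ) : primeIdealCount R n * Real.log n =
    ∑ P ∈ idealsOfNorm R n with Prime P, idealVonMangoldt P := by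
  rw [primeIdealCount, ← nsmul_eq_mul, ← sum_const]
  refine sum_congr rfl fun P hP => ?_
  rw [mem_filter, mem_idealsOfNorm] at hP
  rw [← hP.1, ← idealVonMangoldt_pow_of_prime hP.2 one_ne_zero, pow_one]

theorem sum_idealVonMangoldt_sub_primeIdealCount_mul_log_mem_Icc (n : ℕ) :
    ∑ I ∈ idealsOfNorm R n, idealVonMangoldt I - primeIdealCount R n * Real.log n ∈
      Set.Icc 0 (finrank ℤ R * if n.Prime then 0 else Λ n) := by
  rw [primeIdealCount_mul_log_eq, sum_filter, ← sum_sub_distrib]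
  have hnonneg (I : Ideal R) :
      0 ≤ idealVonMangoldt I - if Prime I then idealVonMangoldt I else 0 := by
    split_ifs <;> simp [idealVonMangoldt_nonneg]
  refine ⟨sum_nonneg fun I _ => hnonneg I, ?_⟩
  split_ifs with hn
  · refine (sum_eq_zero fun I hI => ?_).trans_le (by simp)
    rw [mem_idealsOfNorm] at hI
    have hI' : I ≠ ⊥ := mt Ideal.absNorm_eq_zero_iff.mpr (hI ▸ hn.ne_zero)
    have := Ideal.isPrime_of_irreducible_absNorm (hI ▸ hn)
    rw [if_pos (Ideal.prime_of_isPrime hI' this), sub_self]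
  · refine (sum_le_sum fun I _ => ?_).trans (sum_idealsOfNorm_idealVonMangoldt_le n)
    split_ifs <;> simp [idealVonMangoldt_nonneg]

end DedekindDomain

theorem summable_vonMangoldt_nonprime_div :
    Summable fun n : ℕ => (if n.Prime then 0 else Λ n) / n := by
  have hΛ : vonMangoldt.residueClass (0 : ZMod 1) = Λ := by
    ext n
    simp [vonMangoldt.residueClass, Subsingleton.elim _ (0 : ZMod 1)]
  simpa only [hΛ] using vonMangoldt.summable_residueClass_non_primes_div (q := 1) 0

theorem exists_abs_sum_primeIdealCount_mul_log_div_sub_log_le :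
    ∃ C : ℝ, ∀ X : ℕ, 1 ≤ X →
      |∑ n ∈ Ioc 0 X, primeIdealCount (𝓞 K) n * Real.log n / n - Real.log X| ≤ C := by
  obtain ⟨C, hC⟩ := exists_abs_sum_idealVonMangoldt_div_sub_log_le K
  set H := ∑' n : ℕ, (if n.Prime then 0 else Λ n) / (n : ℝ)
  refine ⟨finrank ℤ (𝓞 K) * H + C, fun X hX => ?_⟩
  have hbound := sum_idealVonMangoldt_sub_primeIdealCount_mul_log_mem_Icc (𝓞 K)
  set T := fun n => ∑ I ∈ idealsOfNorm (𝓞 K) n, idealVonMangoldt I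
  have hdiff : |∑ n ∈ Ioc 0 X, primeIdealCount (𝓞 K) n * Real.log n / n - ∑ n ∈ Ioc 0 X, T n / n| ≤
      finrank ℤ (𝓞 K) * H := by
    rw [abs_sub_comm, ← sum_sub_distrib]
    simp only [← sub_div]
    rw [abs_of_nonneg (sum_nonneg fun n _ => div_nonneg (hbound n).1 n.cast_nonneg)]
    calc _ ≤ ∑ n ∈ Ioc 0 X, (finrank ℤ (𝓞 K) * if n.Prime then 0 else Λ n) / (n : ℝ) :=
          sum_le_sum fun n _ => div_le_div_of_nonneg_right (hbound n).2 n.cast_nonneg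
      _ = finrank ℤ (𝓞 K) * ∑ n ∈ Ioc 0 X, (if n.Prime then 0 else Λ n) / (n : ℝ) := by
          simp only [mul_div_assoc, mul_sum]
      _ ≤ finrank ℤ (𝓞 K) * H := by
          gcongr
          refine summable_vonMangoldt_nonprime_div.sum_le_tsum _ fun n _ => ?_
          split_ifs <;> positivity
  exact (abs_sub_le _ _ _).trans (add_le_add hdiff (hC X hX))

end Mertens

section PartialSummation

open MeasureTheory

theorem sum_mul_sub_integral_eq {c : ℕ → ℝ} {f f' g g' : ℝ → ℝ} {a b : ℝ}
    (ha : 0 ≤ a) (hab : a ≤ b) (hf : ∀ t ∈ Set.Icc a b, HasDerivAt f (f' t) t)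
    (hf' : ContinuousOn f' (Set.Icc a b)) (hg : ∀ t ∈ Set.Icc a b, HasDerivAt g (g' t) t)
    (hg' : ContinuousOn g' (Set.Icc a b)) :
    ∑ k ∈ Ioc ⌊a⌋₊ ⌊b⌋₊, f k * c k - ∫ t in a..b, f t * g' t =
      f b * (∑ k ∈ Icc 0 ⌊b⌋₊, c k - g b) - f a * (∑ k ∈ Icc 0 ⌊a⌋₊, c k - g a) -
        ∫ t in a..b, f' t * (∑ k ∈ Icc 0 ⌊t⌋₊, c k - g t) := by
  have hderiv : Set.EqOn (deriv f) f' (Set.Icc a b) := fun t ht => (hf t ht).deriv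
  have habel : ∑ k ∈ Ioc ⌊a⌋₊ ⌊b⌋₊, f k * c k = f b * ∑ k ∈ Icc 0 ⌊b⌋₊, c k -
      f a * ∑ k ∈ Icc 0 ⌊a⌋₊, c k - ∫ t in a..b, f' t * ∑ k ∈ Icc 0 ⌊t⌋₊, c k := by
    rw [sum_mul_eq_sub_sub_integral_mul c ha hab (fun t ht => (hf t ht).differentiableAt)
      (hf'.integrableOn_Icc.congr_fun hderiv.symm measurableSet_Icc),
      intervalIntegral.integral_of_le hab]
    congr 1
    refine setIntegral_congr_fun measurableSet_Ioc fun t ht => ?_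
    simp only [hderiv (Set.Ioc_subset_Icc_self ht)]
  have hparts : ∫ t in a..b, f t * g' t = f b * g b - f a * g a - ∫ t in a..b, f' t * g t :=
    intervalIntegral.integral_mul_deriv_eq_deriv_mul (Set.uIcc_of_le hab ▸ hf)
      (Set.uIcc_of_le hab ▸ hg) (hf'.intervalIntegrable_of_Icc hab)
      (hg'.intervalIntegrable_of_Icc hab)
  have hsum_int : IntervalIntegrable (fun t => f' t * ∑ k ∈ Icc 0 ⌊t⌋₊, c k) volume a b :=
    (intervalIntegrable_iff_integrableOn_Icc_of_le hab).mpr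
      (integrableOn_mul_sum_Icc c ha hf'.integrableOn_Icc)
  have hmul_int : IntervalIntegrable (fun t => f' t * g t) volume a b :=
    (hf'.mul fun t ht => (hg t ht).continuousAt.continuousWithinAt).intervalIntegrable_of_Icc hab
  simp only [habel, hparts, mul_sub]
  rw [intervalIntegral.integral_sub hsum_int hmul_int]
  ring

theorem abs_integral_deriv_mul_le {f f' e : ℝ → ℝ} {a b C : ℝ} (hab : a ≤ b)
    (hf : ∀ t ∈ Set.Icc a b, HasDerivAt f (f' t) t) (hf' : ContinuousOn f' (Set.Icc a b))
    (hf'_nonpos : ∀ t ∈ Set.Icc a b, f' t ≤ 0) (he : ∀ t ∈ Set.Icc a b, |e t| ≤ C) :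
    |∫ t in a..b, f' t * e t| ≤ C * (f a - f b) := by
  have hint : IntervalIntegrable f' volume a b := hf'.intervalIntegrable_of_Icc hab
  calc |∫ t in a..b, f' t * e t| ≤ ∫ t in a..b, -C * f' t := by
        refine intervalIntegral.norm_integral_le_of_norm_le (f := fun t => f' t * e t) hab
          (ae_of_all _ fun t ht => ?_) (hint.const_mul (-C))
        replace ht := Set.Ioc_subset_Icc_self ht
        rw [Real.norm_eq_abs, abs_mul, abs_of_nonpos (hf'_nonpos t ht), neg_mul, neg_mul,
          neg_le_neg_iff, mul_comm]
        exact mul_le_mul_of_nonpos_left (he t ht) (hf'_nonpos t ht)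
    _ = C * (f a - f b) := by
        rw [intervalIntegral.integral_const_mul, intervalIntegral.integral_eq_sub_of_hasDerivAt
          (Set.uIcc_of_le hab ▸ hf) hint]
        ring

theorem abs_sum_mul_sub_integral_le {c : ℕ → ℝ} {f f' g g' : ℝ → ℝ} {a b C : ℝ}
    (ha : 0 ≤ a) (hab : a ≤ b) (hf : ∀ t ∈ Set.Icc a b, HasDerivAt f (f' t) t)
    (hf' : ContinuousOn f' (Set.Icc a b)) (hf'_nonpos : ∀ t ∈ Set.Icc a b, f' t ≤ 0)
    (hfb : 0 ≤ f b) (hg : ∀ t ∈ Set.Icc a b, HasDerivAt g (g' t) t)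
    (hg' : ContinuousOn g' (Set.Icc a b))
    (hc : ∀ t ∈ Set.Icc a b, |∑ k ∈ Icc 0 ⌊t⌋₊, c k - g t| ≤ C) :
    |∑ k ∈ Ioc ⌊a⌋₊ ⌊b⌋₊, f k * c k - ∫ t in a..b, f t * g' t| ≤ 2 * C * f a := by
  have hanti : AntitoneOn f (Set.Icc a b) :=
    antitoneOn_of_hasDerivWithinAt_nonpos (convex_Icc a b)
      (fun t ht => (hf t ht).continuousAt.continuousWithinAt)
      (fun t ht => (hf t (interior_subset ht)).hasDerivWithinAt)
      (fun t ht => hf'_nonpos t (interior_subset ht))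
  have hfa : 0 ≤ f a := hfb.trans (hanti ⟨le_rfl, hab⟩ ⟨hab, le_rfl⟩ hab)
  have hbound {t : ℝ} (ht : t ∈ Set.Icc a b) (hft : 0 ≤ f t) :
      |f t * (∑ k ∈ Icc 0 ⌊t⌋₊, c k - g t)| ≤ f t * C := by
    rw [abs_mul, abs_of_nonneg hft]
    exact mul_le_mul_of_nonneg_left (hc t ht) hft
  rw [sum_mul_sub_integral_eq ha hab hf hf' hg hg']
  calc _ ≤ f b * C + f a * C + C * (f a - f b) :=
        (abs_sub _ _).trans <| add_le_add ((abs_sub _ _).trans <| add_le_add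
          (hbound ⟨hab, le_rfl⟩ hfb) (hbound ⟨le_rfl, hab⟩ hfa))
          (abs_integral_deriv_mul_le hab hf hf' hf'_nonpos hc)
    _ = 2 * C * f a := by ring

theorem hasDerivAt_log_log_sub_log_sub_log {L t : ℝ} (ht : 1 < t) (htL : Real.log t < L) :
    HasDerivAt (fun t => (Real.log (Real.log t) - Real.log (L - Real.log t)) / L)
      ((Real.log t * (L - Real.log t))⁻¹ * t⁻¹) t := by
  have hlog : 0 < Real.log t := Real.log_pos ht
  have hsub : 0 < L - Real.log t := sub_pos.mpr htL
  have hL : 0 < L := hlog.trans htL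
  have h := Real.hasDerivAt_log (zero_lt_one.trans ht).ne'
  refine (((h.log hlog.ne').sub ((h.const_sub L).log hsub.ne')).div_const L).congr_deriv ?_
  field_simp
  ring

theorem hasDerivAt_inv_log_mul_sub_log {L t : ℝ} (ht : 1 < t) (htL : Real.log t < L) :
    HasDerivAt (fun t => (Real.log t * (L - Real.log t))⁻¹)
      (-((L - 2 * Real.log t) / t / (Real.log t * (L - Real.log t)) ^ 2)) t := by
  have hne := (mul_pos (Real.log_pos ht) (sub_pos.mpr htL)).ne'
  have h := Real.hasDerivAt_log (zero_lt_one.trans ht).ne'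
  refine ((h.mul (h.const_sub L)).inv hne).congr_deriv ?_
  rw [← neg_div]
  congr 1
  ring

theorem integral_inv_log_mul_sub_log_mul_inv {L a b : ℝ} (ha : 1 < a) (hab : a ≤ b)
    (hb : Real.log b < L) :
    ∫ t in a..b, (Real.log t * (L - Real.log t))⁻¹ * t⁻¹ =
      (Real.log (Real.log b) - Real.log (L - Real.log b)) / L -
        (Real.log (Real.log a) - Real.log (L - Real.log a)) / L := by
  have hlt (t : ℝ) (ht : t ∈ Set.Icc a b) : 1 < t ∧ Real.log t < L :=
    ⟨ha.trans_le ht.1,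
      (Real.log_le_log (zero_lt_one.trans (ha.trans_le ht.1)) ht.2).trans_lt hb⟩
  have hcont : ContinuousOn (fun t => (Real.log t * (L - Real.log t))⁻¹ * t⁻¹) (Set.Icc a b) :=
    fun t ht => ((hasDerivAt_inv_log_mul_sub_log (hlt t ht).1 (hlt t ht).2).continuousAt.mul
      (continuousAt_inv₀ (zero_lt_one.trans (hlt t ht).1).ne')).continuousWithinAt
  refine intervalIntegral.integral_eq_sub_of_hasDerivAt
    (f := fun t => (Real.log (Real.log t) - Real.log (L - Real.log t)) / L) (fun t ht => ?_)
    (hcont.intervalIntegrable_of_Icc hab)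
  rw [Set.uIcc_of_le hab] at ht
  exact hasDerivAt_log_log_sub_log_sub_log (hlt t ht).1 (hlt t ht).2

theorem abs_sum_inv_log_mul_sub_log_mul_sub_le {c : ℕ → ℝ} {a b C : ℝ} (ha : 1 < a) (hab : a ≤ b)
    (hc : ∀ t, 1 ≤ t → |∑ k ∈ Icc 0 ⌊t⌋₊, c k - Real.log t| ≤ C) :
    |∑ k ∈ Ioc ⌊a⌋₊ ⌊b⌋₊, (Real.log k * (2 * Real.log b - Real.log k))⁻¹ * c k -
        Real.log (2 * Real.log b / Real.log a - 1) / (2 * Real.log b)| ≤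
      2 * C * (Real.log a * (2 * Real.log b - Real.log a))⁻¹ := by
  have hlog (t : ℝ) (ht : t ∈ Set.Icc a b) :
      1 < t ∧ 0 < Real.log t ∧ Real.log t ≤ Real.log b ∧ Real.log t < 2 * Real.log b := by
    have h₁ := ha.trans_le ht.1
    have h₂ := Real.log_pos h₁
    have h₃ := Real.log_le_log (zero_lt_one.trans h₁) ht.2
    exact ⟨h₁, h₂, h₃, by linarith⟩
  have hpos (t : ℝ) (ht : t ∈ Set.Icc a b) : 0 < t := zero_lt_one.trans (hlog t ht).1
  obtain ⟨-, ha₀, -, ha₁⟩ := hlog a ⟨le_rfl, hab⟩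
  obtain ⟨-, hb₀, -, hb₁⟩ := hlog b ⟨hab, le_rfl⟩
  have hint : ∫ t in a..b, (Real.log t * (2 * Real.log b - Real.log t))⁻¹ * t⁻¹ =
      Real.log (2 * Real.log b / Real.log a - 1) / (2 * Real.log b) := by
    rw [integral_inv_log_mul_sub_log_mul_inv ha hab hb₁, div_sub_one ha₀.ne',
      Real.log_div (by linarith) ha₀.ne']
    ring_nf
  rw [← hint]
  refine abs_sum_mul_sub_integral_le (by linarith) hab
    (fun t ht => hasDerivAt_inv_log_mul_sub_log (hlog t ht).1 (hlog t ht).2.2.2)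
    ?_ (fun t ht => ?_) ?_ (fun t ht => Real.hasDerivAt_log (hpos t ht).ne')
    (continuousOn_inv₀.mono fun t ht => (hpos t ht).ne')
    (fun t ht => hc t (hlog t ht).1.le)
  · have hlog_cont : ContinuousOn Real.log (Set.Icc a b) :=
      Real.continuousOn_log.mono fun t ht => (hpos t ht).ne'
    refine (((continuousOn_const.sub (hlog_cont.const_mul 2)).div continuousOn_id
      fun t ht => (hpos t ht).ne').div ((hlog_cont.mul (continuousOn_const.sub hlog_cont)).pow 2)
      fun t ht => ?_).neg
    exact (pow_pos (mul_pos (hlog t ht).2.1 (sub_pos.mpr (hlog t ht).2.2.2)) 2).ne'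
  · have : 0 ≤ 2 * Real.log b - 2 * Real.log t := by linarith [(hlog t ht).2.2.1]
    exact neg_nonpos.mpr (div_nonneg (div_nonneg this (hpos t ht).le) (sq_nonneg _))
  · exact inv_nonneg.mpr (mul_pos hb₀ (sub_pos.mpr hb₁)).le

theorem abs_sum_Icc_floor_sub_log_le {c : ℕ → ℝ} {C : ℝ} (hc₀ : c 0 = 0)
    (hc : ∀ n : ℕ, 1 ≤ n → |∑ k ∈ Ioc 0 n, c k - Real.log n| ≤ C) {t : ℝ} (ht : 1 ≤ t) :
    |∑ k ∈ Icc 0 ⌊t⌋₊, c k - Real.log t| ≤ C + Real.log 2 := by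
  have hfloor : 1 ≤ ⌊t⌋₊ := Nat.one_le_floor_iff t |>.mpr ht
  have hfloor' : (1 : ℝ) ≤ ⌊t⌋₊ := by exact_mod_cast hfloor
  have hle : Real.log ⌊t⌋₊ ≤ Real.log t :=
    Real.log_le_log (by linarith) (Nat.floor_le (by linarith))
  have hlt : Real.log t ≤ Real.log 2 + Real.log ⌊t⌋₊ := by
    rw [← Real.log_mul two_ne_zero (by linarith)]
    exact Real.log_le_log (by linarith) (by linarith [Nat.lt_floor_add_one t])
  rw [← add_sum_Ioc_eq_sum_Icc (Nat.zero_le _), hc₀, zero_add]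
  refine (abs_sub_le _ _ _).trans (add_le_add (hc _ hfloor) ?_)
  rw [abs_sub_comm, abs_of_nonneg (sub_nonneg.mpr hle)]
  linarith

theorem le_of_abs_sum_Icc_floor_sub_log_le {c : ℕ → ℝ} {C : ℝ}
    (hc : ∀ t, 1 ≤ t → |∑ k ∈ Icc 0 ⌊t⌋₊, c k - Real.log t| ≤ C) {k : ℕ} (hk : 2 ≤ k) :
    c k ≤ 2 * C + Real.log 2 := by
  obtain ⟨j, rfl⟩ := Nat.exists_eq_add_of_le' hk
  have hlog : Real.log (j + 2 : ℕ) ≤ Real.log 2 + Real.log (j + 1 : ℕ) := by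
    rw [← Real.log_mul two_ne_zero (by positivity)]
    refine Real.log_le_log (by positivity) ?_
    push_cast
    linarith
  have hnext := hc (j + 2 : ℕ) (by push_cast; linarith)
  have hprev := hc (j + 1 : ℕ) (by push_cast; linarith)
  rw [Nat.floor_natCast, abs_le] at hnext hprev
  rw [sum_Icc_succ_top (Nat.zero_le _)] at hnext
  linarith [hnext.2, hprev.1]

theorem inv_log_mul_sub_log_le {κ y t : ℝ} (hκ : 0 < κ) (hy : 1 < y) (hlow : y ^ κ ≤ t)
    (hhigh : t ≤ y ^ (1 / 2 : ℝ)) :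
    (Real.log t * (Real.log y - Real.log t))⁻¹ ≤ 2 / (κ * Real.log y ^ 2) := by
  have hy₀ : 0 < y := zero_lt_one.trans hy
  have hL : 0 < Real.log y := Real.log_pos hy
  have hlog_low := Real.log_le_log (by positivity) hlow
  have hlog_high := Real.log_le_log ((Real.rpow_pos_of_pos hy₀ κ).trans_le hlow) hhigh
  rw [Real.log_rpow hy₀] at hlog_low hlog_high
  have hκL : 0 < κ * Real.log y := mul_pos hκ hL
  calc _ ≤ (κ * Real.log y * (Real.log y / 2))⁻¹ := by
        gcongr <;> linarith
    _ = 2 / (κ * Real.log y ^ 2) := by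
        field_simp

theorem div_div_log_div_eq {y t : ℝ} (hy : y ≠ 0) (ht : 1 < t) :
    y / t / Real.log (y / t) =
      y * ((Real.log t * (Real.log y - Real.log t))⁻¹ * (Real.log t / t)) := by
  have ht₀ : t ≠ 0 := (zero_lt_one.trans ht).ne'
  have hlog : Real.log t ≠ 0 := (Real.log_pos ht).ne'
  rw [Real.log_div hy ht₀, mul_inv]
  field_simp

section Weights

variable {r : ℕ → ℝ} {C κ y : ℝ} {n : ℕ}

theorem mul_abs_div_div_log_div_le (hrn : 0 ≤ r n)
    (hr : ∀ t, 1 ≤ t → |∑ k ∈ Icc 0 ⌊t⌋₊, r k * Real.log k / k - Real.log t| ≤ C)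
    (hκ : 0 < κ) (hy : 1 < y) (hlow : y ^ κ ≤ n) (hhigh : n ≤ y ^ (1 / 2 : ℝ)) :
    r n * |y / n / Real.log (y / n)| ≤ (4 * C + 2 * Real.log 2) / κ * y / Real.log y ^ 2 := by
  have hn : (1 : ℝ) < n := (Real.one_lt_rpow hy hκ).trans_le hlow
  have hny : (n : ℝ) < y := hhigh.trans_lt (Real.rpow_lt_self_of_one_lt hy (by norm_num))
  have hlog : 0 < Real.log (y / n) := Real.log_pos ((one_lt_div (by linarith)).mpr hny)
  have hlog' : 0 < Real.log n * (Real.log y - Real.log n) :=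
    mul_pos (Real.log_pos hn) (sub_pos.mpr (Real.log_lt_log (by linarith) hny))
  have hterm : r n * Real.log n / n ≤ 2 * C + Real.log 2 :=
    le_of_abs_sum_Icc_floor_sub_log_le hr (by exact_mod_cast hn)
  rw [abs_of_pos (by positivity), div_div_log_div_eq (by linarith) hn]
  calc _ = y * (r n * Real.log n / n) * (Real.log n * (Real.log y - Real.log n))⁻¹ := by ring
    _ ≤ y * (2 * C + Real.log 2) * (2 / (κ * Real.log y ^ 2)) := by
        gcongr
        · exact mul_nonneg (by linarith) (hterm.trans' (by positivity))
        · exact inv_log_mul_sub_log_le hκ hy hlow hhigh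
    _ = _ := by
        field_simp
        ring

theorem abs_sum_mul_div_div_log_div_sub_le
    (hr : ∀ t, 1 ≤ t → |∑ k ∈ Icc 0 ⌊t⌋₊, r k * Real.log k / k - Real.log t| ≤ C)
    (hκ : 0 < κ) (hy : 1 < y) (hlow : y ^ κ ≤ n) (hhigh : n ≤ y ^ (1 / 2 : ℝ)) :
    |∑ k ∈ Ioc n ⌊y ^ (1 / 2 : ℝ)⌋₊, r k * (y / k / Real.log (y / k)) -
        Real.log (Real.log y / Real.log n - 1) / (Real.log y / Real.log n) * (y / Real.log n)| ≤
      4 * C / κ * y / Real.log y ^ 2 := by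
  have hn : (1 : ℝ) < n := (Real.one_lt_rpow hy hκ).trans_le hlow
  have hlogn : Real.log n ≠ 0 := (Real.log_pos hn).ne'
  have hC : 0 ≤ C := (abs_nonneg _).trans (hr 1 le_rfl)
  have hsqrt : 2 * Real.log (y ^ (1 / 2 : ℝ)) = Real.log y := by
    rw [Real.log_rpow (by linarith)]; ring
  have hmain := abs_sum_inv_log_mul_sub_log_mul_sub_le hn hhigh hr
  rw [hsqrt, Nat.floor_natCast] at hmain
  have hterm : ∀ k ∈ Ioc n ⌊y ^ (1 / 2 : ℝ)⌋₊, r k * (y / k / Real.log (y / k)) =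
      y * ((Real.log k * (Real.log y - Real.log k))⁻¹ * (r k * Real.log k / k)) := by
    intro k hk
    have : (n : ℝ) < k := by exact_mod_cast (mem_Ioc.mp hk).1
    rw [div_div_log_div_eq (by linarith) (hn.trans this)]
    ring
  have hmainterm (x : ℝ) :
      x / (Real.log y / Real.log n) * (y / Real.log n) = y * (x / Real.log y) := by
    rw [div_mul_div_comm, div_mul_cancel₀ _ hlogn, mul_comm x, mul_div_assoc]
  rw [sum_congr rfl hterm, hmainterm, ← mul_sum, ← mul_sub, abs_mul, abs_of_pos (by linarith)]
  calc _ ≤ y * (2 * C * (2 / (κ * Real.log y ^ 2))) := by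
        gcongr
        refine hmain.trans ?_
        gcongr
        exact inv_log_mul_sub_log_le hκ hy hlow hhigh
    _ = _ := by
        field_simp
        ring

end Weights

end PartialSummation

section PrimeIdealSums

theorem exists_abs_sum_Icc_floor_primeIdealCount_sub_log_le :
    ∃ C : ℝ, ∀ t : ℝ, 1 ≤ t →
      |∑ k ∈ Icc 0 ⌊t⌋₊, primeIdealCount (𝓞 K) k * Real.log k / k - Real.log t| ≤ C := by
  obtain ⟨C, hC⟩ := exists_abs_sum_primeIdealCount_mul_log_div_sub_log_le K
  exact ⟨C + Real.log 2, fun t ht => abs_sum_Icc_floor_sub_log_le (by simp) hC ht⟩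

/-- The finite set of nonzero prime ideals of norm `n`, as elements of `PrimeIdeal K`. -/
noncomputable def primeIdealsOfNorm (n : ℕ) : Finset (PrimeIdeal K) :=
  (idealsOfNorm (𝓞 K) n).preimage (fun s : PrimeIdeal K => s.1) Subtype.val_injective.injOn

variable {K}

@[simp]
theorem mem_primeIdealsOfNorm {n : ℕ} {s : PrimeIdeal K} :
    s ∈ primeIdealsOfNorm K n ↔ Ideal.absNorm s.1 = n :=
  mem_preimage.trans mem_idealsOfNorm

theorem card_primeIdealsOfNorm (n : ℕ) :
    #(primeIdealsOfNorm K n) = primeIdealCount (𝓞 K) n := by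
  refine (card_preimage ..).trans (congrArg card (filter_congr fun P _ => ⟨?_, fun h => ?_⟩))
  · rintro ⟨⟨P, hP, hP'⟩, rfl⟩
    exact Ideal.prime_of_isPrime hP hP'
  · exact ⟨⟨P, h.ne_zero, Ideal.isPrime_of_prime h⟩, rfl⟩

theorem tsum_primeIdeal_eq_sum {h : PrimeIdeal K → ℝ} {A : Finset ℕ}
    (hA : ∀ s, h s ≠ 0 → Ideal.absNorm s.1 ∈ A) :
    ∑' s, h s = ∑ n ∈ A, ∑ s ∈ primeIdealsOfNorm K n, h s := by
  have hdisj : (A : Set ℕ).PairwiseDisjoint (primeIdealsOfNorm K) := fun m _ n _ hmn =>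
    disjoint_left.mpr fun s hm hn =>
      hmn ((mem_primeIdealsOfNorm.mp hm).symm.trans (mem_primeIdealsOfNorm.mp hn))
  rw [← sum_biUnion hdisj]
  refine tsum_eq_sum fun s hs => not_not.mp fun hne => hs ?_
  exact mem_biUnion.mpr ⟨_, hA s hne, mem_primeIdealsOfNorm.mpr rfl⟩

theorem abs_sum_ite_le_card_mul {ι : Type*} (A : Finset ι) (R : ι → Prop) [DecidablePred R]
    (x : ℝ) :
    |∑ i ∈ A, if R i then x else 0| ≤ #A * |x| := by
  rw [← sum_filter, sum_const, nsmul_eq_mul, abs_mul, Nat.abs_cast]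
  gcongr
  exact filter_subset ..

theorem abs_sum_Icc_sub_sum_Ioc_le {u v : ℕ → ℝ} {a b : ℕ} {α β : ℝ} (hab : a ≤ b)
    (huv : ∀ n ∈ Ioo a b, u n = v n) (ha : |u a| ≤ α) (hb : |u b - v b| ≤ β) :
    |∑ n ∈ Icc a b, u n - ∑ n ∈ Ioc a b, v n| ≤ α + β := by
  rw [← add_sum_Ioc_eq_sum_Icc hab, add_sub_assoc, ← sum_sub_distrib]
  refine (abs_add_le _ _).trans (add_le_add ha ?_)
  obtain rfl | hlt := hab.eq_or_lt
  · simpa using (abs_nonneg _).trans hb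
  · rwa [sum_eq_single_of_mem b (right_mem_Ioc.mpr hlt) fun n hn hnb => ?_]
    rw [mem_Ioc] at hn
    rw [huv n (mem_Ioo.mpr ⟨hn.1, lt_of_le_of_ne hn.2 hnb⟩), sub_self]

theorem abs_tsum_primeIdeal_ite_sub_sum_le {R : PrimeIdeal K → Prop} [DecidablePred R]
    {a b : ℕ} (hab : a ≤ b)
    (hmem : ∀ s, R s → Ideal.absNorm s.1 ∈ Icc a b)
    (hR : ∀ s, Ideal.absNorm s.1 ∈ Ioo a b → R s) (g : ℕ → ℝ) :
    |∑' s, (if R s then g (Ideal.absNorm s.1) else 0) -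
        ∑ n ∈ Ioc a b, primeIdealCount (𝓞 K) n * g n| ≤
      primeIdealCount (𝓞 K) a * |g a| + primeIdealCount (𝓞 K) b * |g b| := by
  have hcongr (n : ℕ) :
      ∑ s ∈ primeIdealsOfNorm K n, (if R s then g (Ideal.absNorm s.1) else 0) =
        ∑ s ∈ primeIdealsOfNorm K n, if R s then g n else 0 :=
    sum_congr rfl fun s hs => by rw [mem_primeIdealsOfNorm.mp hs]
  have hcount (n : ℕ) :
      primeIdealCount (𝓞 K) n * g n = ∑ _s ∈ primeIdealsOfNorm K n, g n := by
    rw [sum_const, card_primeIdealsOfNorm, nsmul_eq_mul]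
  rw [tsum_primeIdeal_eq_sum fun s hs => hmem s (not_imp_comm.mp (if_neg ·) hs)]
  simp only [hcongr]
  refine abs_sum_Icc_sub_sum_Ioc_le hab (fun n hn => ?_) ?_ ?_
  · rw [hcount]
    exact sum_congr rfl fun s hs => if_pos (hR s (mem_primeIdealsOfNorm.mp hs ▸ hn))
  · rw [← card_primeIdealsOfNorm]
    exact abs_sum_ite_le_card_mul ..
  · rw [hcount, abs_sub_comm, ← sum_sub_distrib, ← card_primeIdealsOfNorm]
    convert abs_sum_ite_le_card_mul (primeIdealsOfNorm K b) (¬ R ·) (g b) using 4 with s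
    split_ifs <;> simp_all

theorem absNorm_mem_Icc_of_lt {lt : PrimeIdeal K → PrimeIdeal K → Prop} [Std.Asymm lt]
    (hcompat : ∀ p q : PrimeIdeal K, Ideal.absNorm p.1 < Ideal.absNorm q.1 → lt p q)
    {x : ℝ} {p Q : PrimeIdeal K}
    (hQ : ∀ s : PrimeIdeal K, x ≤ (Ideal.absNorm s.1 : ℝ) → ¬ lt s Q)
    {s : PrimeIdeal K} (hs : (lt p s ∨ p = s) ∧ lt s Q) :
    Ideal.absNorm s.1 ∈ Icc (Ideal.absNorm p.1) ⌊x⌋₊ := by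
  refine mem_Icc.mpr ⟨?_, Nat.le_floor (not_lt.mp fun h => hQ s h.le hs.2)⟩
  obtain hps | rfl := hs.1
  · exact not_lt.mp fun h => Std.Asymm.asymm _ _ hps (hcompat s p h)
  · rfl

theorem lt_of_absNorm_mem_Ioo {lt : PrimeIdeal K → PrimeIdeal K → Prop}
    (hcompat : ∀ p q : PrimeIdeal K, Ideal.absNorm p.1 < Ideal.absNorm q.1 → lt p q)
    {x : ℝ} {p Q : PrimeIdeal K} (hQ : x ≤ (Ideal.absNorm Q.1 : ℝ))
    {s : PrimeIdeal K} (hs : Ideal.absNorm s.1 ∈ Ioo (Ideal.absNorm p.1) ⌊x⌋₊) :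
    (lt p s ∨ p = s) ∧ lt s Q := by
  obtain ⟨hps, hsx⟩ := mem_Ioo.mp hs
  exact ⟨.inl (hcompat p s hps),
    hcompat s Q (by exact_mod_cast (Nat.lt_of_lt_floor hsx).trans_le hQ)⟩

end PrimeIdealSums

theorem prime_sum_partial_summation_general
    (lt : PrimeIdeal K → PrimeIdeal K → Prop) [Std.Asymm lt]
    (hcompat : ∀ p q : PrimeIdeal K, Ideal.absNorm p.1 < Ideal.absNorm q.1 → lt p q)
    {κ : ℝ} (hκ : 0 < κ) :
    ∃ c : ℝ, ∀ y : ℝ, 1 < y →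
      ∀ p : PrimeIdeal K,
        y ^ κ ≤ (Ideal.absNorm p.1 : ℝ) →
        (Ideal.absNorm p.1 : ℝ) < y ^ ((1 : ℝ) / 2) →
      ∀ Q : PrimeIdeal K,
        y ^ ((1 : ℝ) / 2) ≤ (Ideal.absNorm Q.1 : ℝ) →
        (∀ s : PrimeIdeal K, y ^ ((1 : ℝ) / 2) ≤ (Ideal.absNorm s.1 : ℝ) → ¬ lt s Q) →
      |(∑' s : PrimeIdeal K,
            if (lt p s ∨ p = s) ∧ lt s Q then
              (y / (Ideal.absNorm s.1 : ℝ)) / Real.log (y / (Ideal.absNorm s.1 : ℝ))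
            else 0) -
          Real.log (Real.log y / Real.log (Ideal.absNorm p.1 : ℝ) - 1) /
              (Real.log y / Real.log (Ideal.absNorm p.1 : ℝ)) *
            (y / Real.log (Ideal.absNorm p.1 : ℝ))|
        ≤ c * y / (Real.log y) ^ 2 := by
  obtain ⟨C, hC⟩ := exists_abs_sum_Icc_floor_primeIdealCount_sub_log_le K
  refine ⟨(12 * C + 4 * Real.log 2) / κ, fun y hy p hlow hhigh Q hQ hQmin => ?_⟩
  set z := Ideal.absNorm p.1
  set b := ⌊y ^ ((1 : ℝ) / 2)⌋₊
  have hzb : z ≤ b := Nat.le_floor hhigh.le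
  have hb : (b : ℝ) ≤ y ^ ((1 : ℝ) / 2) := Nat.floor_le (by positivity)
  have hendpoint (n : ℕ) (hzn : z ≤ n) (hnb : n ≤ b) :=
    mul_abs_div_div_log_div_le (r := fun n => primeIdealCount (𝓞 K) n) (Nat.cast_nonneg _) hC hκ hy
      (hlow.trans (Nat.cast_le.mpr hzn)) ((Nat.cast_le.mpr hnb).trans hb)
  have hgroup := abs_tsum_primeIdeal_ite_sub_sum_le hzb
    (fun s => absNorm_mem_Icc_of_lt hcompat hQmin) (fun s => lt_of_absNorm_mem_Ioo hcompat hQ)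
    (fun n => y / n / Real.log (y / n))
  have habel := abs_sum_mul_div_div_log_div_sub_le hC hκ hy hlow hhigh.le
  refine (abs_sub_le _ _ _).trans <| (add_le_add (hgroup.trans
    (add_le_add (hendpoint z le_rfl hzb) (hendpoint b hzb le_rfl))) habel).trans_eq ?_
  ring

/-- **A partial summation estimate over prime ideals.** For all sufficiently large `y`,
for any prime ideal `𝔭` with `y^{1/3} ≤ 𝒩(𝔭) < y^{1/2}` and `u = log y / log 𝒩(𝔭)`,
and with `𝔔(y^{1/2})` the `≺`-smallest prime ideal of norm `≥ y^{1/2}`,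
`∑_{𝔭 ≼ 𝔰 ≺ 𝔔(y^{1/2})} (y/𝒩(𝔰))/log(y/𝒩(𝔰)) = (log(u−1)/u)·y/log 𝒩(𝔭) + O(y/log² y)`. -/
theorem prime_sum_partial_summation
    (lt : PrimeIdeal K → PrimeIdeal K → Prop)
    (hord : IsStrictTotalOrder (PrimeIdeal K) lt)
    (hcompat : ∀ p q : PrimeIdeal K, Ideal.absNorm p.1 < Ideal.absNorm q.1 → lt p q) :
    ∃ c : ℝ, ∃ y₀ : ℝ, ∀ y : ℝ, y₀ ≤ y →
      ∀ p : PrimeIdeal K,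
        y ^ ((1 : ℝ)/3) ≤ (Ideal.absNorm p.1 : ℝ) →
        (Ideal.absNorm p.1 : ℝ) < y ^ ((1 : ℝ)/2) →
      -- `Q` is the `≺`-smallest prime ideal with norm `≥ y^{1/2}`
      ∀ Q : PrimeIdeal K,
        y ^ ((1 : ℝ)/2) ≤ (Ideal.absNorm Q.1 : ℝ) →
        (∀ s : PrimeIdeal K, y ^ ((1 : ℝ)/2) ≤ (Ideal.absNorm s.1 : ℝ) → ¬ lt s Q) →
      |(∑' s : PrimeIdeal K,
            if (lt p s ∨ p = s) ∧ lt s Q then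
              (y / (Ideal.absNorm s.1 : ℝ)) / Real.log (y / (Ideal.absNorm s.1 : ℝ))
            else 0) -
          Real.log (Real.log y / Real.log (Ideal.absNorm p.1 : ℝ) - 1) /
              (Real.log y / Real.log (Ideal.absNorm p.1 : ℝ)) *
            (y / Real.log (Ideal.absNorm p.1 : ℝ))|
        ≤ c * y / (Real.log y)^2 := by
  obtain ⟨c, hc⟩ := prime_sum_partial_summation_general K lt hcompat (κ := 1 / 3) (by norm_num)
  exact ⟨c, 2, fun y hy => hc y (by linarith)⟩
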